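/- For every path-loss exponent α > 2 and every constant b > 0, the planar integral ∫_{ℝ²} (1 − 1/(1 + b‖x‖^{−α})) dx converges and equals b^{2/α} · π² · (2/α) / sin(2π/α); equivalently, 2π ∫_0^∞ (1 − 1/(1 + b t^{−α})) t dt = b^{2/α} π² (2/α) / sin(π·(2/α)). -/

import Mathlib

open MeasureTheory Real

/-!
Polar coordinates reduce the integral over a `d`-dimensional space to a radial one, and the
substitution `u = t ^ α` turns the radial integral into `∫ u ^ (s - 1) / (u + b)` over the positive
half-line, with `s = d / α ∈ (0, 1)`. This is a beta integral: replacing a power of `u + b` by the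
Gamma integral `∫ y ^ (p - 1) * exp (-(u + b) * y)` and exchanging the order of integration leaves
two Gamma integrals. Euler's reflection formula `Γ(s) Γ(1 - s) = π / sin (π s)` then produces the
sine.
-/

theorem integrableOn_rpow_mul_exp_neg_mul_Ioi {a r : ℝ} (ha : 0 < a) (hr : 0 < r) :
    IntegrableOn (fun t : ℝ => t ^ (a - 1) * exp (-(r * t))) (Set.Ioi 0) := by
  refine .of_integral_ne_zero ?_
  rw [integral_rpow_mul_exp_neg_mul_Ioi ha hr]
  exact (mul_pos (by positivity) (Gamma_pos_of_pos ha)).ne'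

section BetaIntegral

variable {u v b : ℝ}

theorem rpow_mul_exp_neg_add_mul_eq (x y : ℝ) :
    x ^ (u - 1) * (y ^ (u + v - 1) * exp (-((x + b) * y))) =
      y ^ (u + v - 1) * exp (-(b * y)) * (x ^ (u - 1) * exp (-(y * x))) := by
  have hexp : exp (-((x + b) * y)) = exp (-(b * y)) * exp (-(y * x)) := by
    rw [← exp_add]
    ring_nf
  rw [hexp]
  ring

theorem integral_rpow_mul_exp_neg_add_mul {y : ℝ} (hu : 0 < u) (hy : 0 < y) :
    ∫ x in Set.Ioi (0 : ℝ), x ^ (u - 1) * (y ^ (u + v - 1) * exp (-((x + b) * y))) =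
      Gamma u * (y ^ (v - 1) * exp (-(b * y))) := by
  have hpow : y ^ (u + v - 1) = y ^ (v - 1) * y ^ u := by
    rw [← rpow_add hy]
    ring_nf
  simp_rw [rpow_mul_exp_neg_add_mul_eq]
  rw [integral_const_mul, integral_rpow_mul_exp_neg_mul_Ioi hu hy, one_div, inv_rpow hy.le, hpow]
  field_simp

theorem integrable_prod_rpow_mul_exp_neg_add_mul (hu : 0 < u) (hv : 0 < v) (hb : 0 < b) :
    Integrable
      (Function.uncurry fun x y : ℝ => x ^ (u - 1) * (y ^ (u + v - 1) * exp (-((x + b) * y))))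
      ((volume.restrict (Set.Ioi 0)).prod (volume.restrict (Set.Ioi 0))) := by
  have hmeas : Measurable (Function.uncurry fun x y : ℝ =>
      x ^ (u - 1) * (y ^ (u + v - 1) * exp (-((x + b) * y)))) := by
    unfold Function.uncurry
    fun_prop
  refine (integrable_prod_iff' hmeas.aestronglyMeasurable).2 ⟨?_, ?_⟩
  · filter_upwards [ae_restrict_mem measurableSet_Ioi] with y hy
    simp only [Function.uncurry_apply_pair, rpow_mul_exp_neg_add_mul_eq]
    exact (integrableOn_rpow_mul_exp_neg_mul_Ioi hu hy).const_mul _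
  · refine ((integrableOn_rpow_mul_exp_neg_mul_Ioi hv hb).const_mul (Gamma u)).congr ?_
    filter_upwards [ae_restrict_mem measurableSet_Ioi] with y (hy : 0 < y)
    rw [← integral_rpow_mul_exp_neg_add_mul hu hy]
    refine setIntegral_congr_fun measurableSet_Ioi fun x (hx : 0 < x) => ?_
    exact (norm_of_nonneg (by positivity)).symm

theorem integral_rpow_div_add_rpow (hu : 0 < u) (hv : 0 < v) (hb : 0 < b) :
    ∫ x in Set.Ioi (0 : ℝ), x ^ (u - 1) / (x + b) ^ (u + v) =
      b ^ (-v) * ProbabilityTheory.beta u v := by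
  have hΓ : Gamma (u + v) ≠ 0 := (Gamma_pos_of_pos (add_pos hu hv)).ne'
  have hGamma : ∀ x ∈ Set.Ioi (0 : ℝ), x ^ (u - 1) / (x + b) ^ (u + v) = (Gamma (u + v))⁻¹ *
      ∫ y in Set.Ioi (0 : ℝ), x ^ (u - 1) * (y ^ (u + v - 1) * exp (-((x + b) * y))) := by
    intro x (hx : 0 < x)
    have hxb : 0 < x + b := add_pos hx hb
    rw [integral_const_mul, integral_rpow_mul_exp_neg_mul_Ioi (add_pos hu hv) hxb, one_div,
      inv_rpow hxb.le]
    field_simp [hΓ]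
  calc
    ∫ x in Set.Ioi (0 : ℝ), x ^ (u - 1) / (x + b) ^ (u + v)
    _ = (Gamma (u + v))⁻¹ * ∫ x in Set.Ioi (0 : ℝ), ∫ y in Set.Ioi (0 : ℝ),
          x ^ (u - 1) * (y ^ (u + v - 1) * exp (-((x + b) * y))) := by
      rw [setIntegral_congr_fun measurableSet_Ioi hGamma, integral_const_mul]
    _ = (Gamma (u + v))⁻¹ * ∫ y in Set.Ioi (0 : ℝ), ∫ x in Set.Ioi (0 : ℝ),
          x ^ (u - 1) * (y ^ (u + v - 1) * exp (-((x + b) * y))) := by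
      rw [integral_integral_swap (integrable_prod_rpow_mul_exp_neg_add_mul hu hv hb)]
    _ = (Gamma (u + v))⁻¹ * ∫ y in Set.Ioi (0 : ℝ), Gamma u * (y ^ (v - 1) * exp (-(b * y))) := by
      rw [setIntegral_congr_fun measurableSet_Ioi fun y hy =>
        integral_rpow_mul_exp_neg_add_mul hu hy]
    _ = b ^ (-v) * ProbabilityTheory.beta u v := by
      rw [integral_const_mul, integral_rpow_mul_exp_neg_mul_Ioi hv hb, one_div, inv_rpow hb.le,
        ← rpow_neg hb.le, ProbabilityTheory.beta]
      ring

end BetaIntegral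

theorem beta_one_sub (s : ℝ) : ProbabilityTheory.beta s (1 - s) = π / sin (π * s) := by
  rw [ProbabilityTheory.beta, Gamma_mul_Gamma_one_sub, add_sub_cancel, Gamma_one, div_one]

theorem integral_rpow_div_add {s b : ℝ} (hs₀ : 0 < s) (hs₁ : s < 1) (hb : 0 < b) :
    ∫ x in Set.Ioi (0 : ℝ), x ^ (s - 1) / (x + b) = b ^ (s - 1) * (π / sin (π * s)) := by
  have h := integral_rpow_div_add_rpow hs₀ (sub_pos.2 hs₁) hb
  simpa only [add_sub_cancel, rpow_one, neg_sub, beta_one_sub] using h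

theorem integral_one_sub_one_div_mul_rpow {α b p : ℝ} (hp : 0 < p) (hpα : p < α) (hb : 0 < b) :
    ∫ t in Set.Ioi (0 : ℝ), (1 - 1 / (1 + b * t ^ (-α))) * t ^ (p - 1) =
      b ^ (p / α) * (π / α) / sin (π * (p / α)) := by
  have hα : 0 < α := hp.trans hpα
  have hsubst : ∀ t ∈ Set.Ioi (0 : ℝ), (1 - 1 / (1 + b * t ^ (-α))) * t ^ (p - 1) =
      b / α * ((|α| * t ^ (α - 1)) • ((t ^ α) ^ (p / α - 1) / (t ^ α + b))) := by
    intro t (ht : 0 < t)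
    have hpow : t ^ (p - 1) = t ^ (α - 1) * (t ^ α) ^ (p / α - 1) := by
      rw [← rpow_mul ht.le, ← rpow_add ht]
      congr 1
      field_simp
      ring
    rw [hpow, abs_of_pos hα, rpow_neg ht.le, smul_eq_mul]
    field_simp
    ring
  rw [setIntegral_congr_fun measurableSet_Ioi hsubst, integral_const_mul,
    integral_comp_rpow_Ioi (fun x : ℝ => x ^ (p / α - 1) / (x + b)) hα.ne',
    integral_rpow_div_add (div_pos hp hα) ((div_lt_one hα).2 hpα) hb, rpow_sub_one hb.ne']
  field_simp

theorem planar_interference_integral_general {E : Type*} [NormedAddCommGroup E] [NormedSpace ℝ E]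
    [FiniteDimensional ℝ E] [Nontrivial E] [MeasurableSpace E] [BorelSpace E] (μ : Measure E)
    [μ.IsAddHaarMeasure] {α b : ℝ} (hα : Module.finrank ℝ E < α) (hb : 0 < b) :
    let d := Module.finrank ℝ E
    let I := μ.real (Metric.ball 0 1) * (b ^ (d / α) * π * (d / α) / sin (π * (d / α)))
    Integrable (fun x : E => 1 - 1 / (1 + b * ‖x‖ ^ (-α))) μ
    ∧ ∫ x : E, (1 - 1 / (1 + b * ‖x‖ ^ (-α))) ∂μ = I
    ∧ d * μ.real (Metric.ball 0 1) *
        ∫ t in Set.Ioi (0 : ℝ), (1 - 1 / (1 + b * t ^ (-α))) * t ^ (d - 1) = I := by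
  intro d I
  have hd : 0 < d := Module.finrank_pos
  have hd_cast : (0 : ℝ) < d := Nat.cast_pos.2 hd
  have hα₀ : 0 < α := hd_cast.trans hα
  have hradial : d * μ.real (Metric.ball 0 1) *
      ∫ t in Set.Ioi (0 : ℝ), (1 - 1 / (1 + b * t ^ (-α))) * t ^ (d - 1) = I := by
    have h := integral_one_sub_one_div_mul_rpow hd_cast hα hb
    simp_rw [← Nat.cast_pred hd, rpow_natCast] at h
    rw [h]
    ring
  have hpolar : ∫ x : E, (1 - 1 / (1 + b * ‖x‖ ^ (-α))) ∂μ = I := by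
    rw [← hradial, integral_fun_norm_addHaar μ fun r : ℝ => 1 - 1 / (1 + b * r ^ (-α))]
    simp only [nsmul_eq_mul, smul_eq_mul, mul_assoc, mul_comm (_ ^ (d - 1)), d]
  have hI : 0 < I := by
    have hball : 0 < μ.real (Metric.ball 0 1) :=
      ENNReal.toReal_pos (Metric.measure_ball_pos μ 0 one_pos).ne' measure_ball_lt_top.ne
    have hsin : 0 < sin (π * (d / α)) := sin_pos_of_pos_of_lt_pi (by positivity)
      (mul_lt_of_lt_one_right pi_pos ((div_lt_one hα₀).2 hα))
    positivity
  exact ⟨.of_integral_ne_zero (hpolar.trans_ne hI.ne'), hpolar, hradial⟩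

theorem volume_real_ball_zero_one_fin_two :
    volume.real (Metric.ball (0 : EuclideanSpace ℝ (Fin 2)) 1) = π := by
  simp [Measure.real, EuclideanSpace.volume_ball_fin_two, pi_pos.le]

/-- For every path-loss exponent `α > 2` and every constant `b > 0`, the planar integral
`∫_{ℝ²} (1 − 1/(1 + b‖x‖^{−α})) dx` equals `b^{2/α} · π² · (2/α) / sin(2π/α)`; equivalently,
`2π ∫_0^∞ (1 − 1/(1 + b t^{−α})) t dt` equals the same value. -/
theorem planar_interference_integral (α b : ℝ) (hα : 2 < α) (hb : 0 < b) :
    (∫ x : EuclideanSpace ℝ (Fin 2), (1 - 1 / (1 + b * ‖x‖ ^ (-α)))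
        = b ^ (2 / α) * π ^ 2 * (2 / α) / Real.sin (2 * π / α))
    ∧ (2 * π * ∫ t in Set.Ioi (0 : ℝ), (1 - 1 / (1 + b * t ^ (-α))) * t
        = b ^ (2 / α) * π ^ 2 * (2 / α) / Real.sin (π * (2 / α))) := by
  have h := planar_interference_integral_general
    (volume : Measure (EuclideanSpace ℝ (Fin 2))) (by simpa using hα) hb
  simp only [finrank_euclideanSpace_fin, volume_real_ball_zero_one_fin_two, Nat.cast_ofNat,
    Nat.add_one_sub_one, pow_one] at h
  rw [show 2 * π / α = π * (2 / α) by ring]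
  exact ⟨h.2.1.trans (by ring), h.2.2.trans (by ring)⟩
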